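/- Let C be the binary relation on ℤ × ℤ defined by C (x, y) (x', y') ↔ x = 100 ∧ 1 < x' ∧ x' ≤ 100 ∧ y' = y + 1 (the composition of τ_{x=100}, τ_{x<100}, and the accelerated inner loop in the running example). Then for all (x, y), (x', y') ∈ ℤ × ℤ: Relation.TransGen C (x, y) (x', y') holds if and only if x = 100, 1 < x' ≤ 100, and there exists an integer n > 0 with y' = y + n. (Correctness of the accelerated outer loop τ_o⁺.) -/

import Mathlib

/-!
A step of the loop constrains the first coordinate of its source and of its target separately, and
moves the second coordinate on its own. Because `100` meets both constraints, every intermediate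
state of a chain can be given first coordinate `100`; so a chain exists as soon as the first
coordinates of its ends are admissible and there is a chain of second coordinates. The latter is
a chain of covers in `ℤ`, that is, a strict inequality.
-/

open Relation

section Guarded

variable {α β : Type*} {P Q : α → Prop} {r : β → β → Prop}

theorem transGen_guarded_of_transGen_snd {c : α} (hPc : P c) (hQc : Q c) {a a' : α} {b b' : β}
    (ha : P a) (ha' : Q a') (h : TransGen r b b') :
    TransGen (fun p q : α × β => P p.1 ∧ Q q.1 ∧ r p.2 q.2) (a, b) (a', b') := by
  induction h generalizing a' with
  | single hr => exact .single ⟨ha, ha', hr⟩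
  | tail _ hr ih => exact (ih hQc).tail ⟨hPc, ha', hr⟩

theorem transGen_guarded_iff {c : α} (hPc : P c) (hQc : Q c) {p q : α × β} :
    TransGen (fun p q : α × β => P p.1 ∧ Q q.1 ∧ r p.2 q.2) p q ↔
      P p.1 ∧ Q q.1 ∧ TransGen r p.2 q.2 := by
  constructor
  · intro h
    obtain ⟨_, ⟨hP, -, -⟩, -⟩ := TransGen.head'_iff.mp h
    obtain ⟨_, -, -, hQ, -⟩ := TransGen.tail'_iff.mp h
    exact ⟨hP, hQ, h.lift Prod.snd fun _ _ hstep => hstep.2.2⟩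
  · rintro ⟨hP, hQ, hr⟩
    exact transGen_guarded_of_transGen_snd hPc hQc hP hQ hr

end Guarded

theorem stmt_1 :
    ∀ x y x' y' : ℤ,
      Relation.TransGen
        (fun p q : ℤ × ℤ => p.1 = 100 ∧ 1 < q.1 ∧ q.1 ≤ 100 ∧ q.2 = p.2 + 1)
        (x, y) (x', y') ↔
      (x = 100 ∧ 1 < x' ∧ x' ≤ 100 ∧ ∃ n : ℤ, n > 0 ∧ y' = y + n) := by
  intro x y x' y'
  calc
    _ ↔ TransGen (fun p q : ℤ × ℤ => p.1 = 100 ∧ (1 < q.1 ∧ q.1 ≤ 100) ∧ p.2 ⋖ q.2)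
          (x, y) (x', y') := by
      simp only [Order.covBy_iff_add_one_eq, eq_comm (b := _ + (1 : ℤ)), and_assoc]
    _ ↔ x = 100 ∧ (1 < x' ∧ x' ≤ 100) ∧ TransGen (· ⋖ ·) y y' :=
      transGen_guarded_iff (P := (· = 100)) (Q := fun z => 1 < z ∧ z ≤ 100)
        (c := 100) rfl (by norm_num)
    _ ↔ x = 100 ∧ (1 < x' ∧ x' ≤ 100) ∧ y < y' := by rw [← lt_iff_transGen_covBy]
    _ ↔ _ := by
      rw [lt_iff_exists_pos_add (a := y)]
      simp only [gt_iff_lt, eq_comm (a := y'), and_assoc]
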